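/- (Transversality conditions, unconstrained case.) Let 0 < α ≤ 1 and β > 0, and let φ : ℝⁿ×ℝⁿ → ℝ and L : ℝⁿ×ℝⁿ×[a,b] → ℝ be of class C². For (u',y') ∈ L^∞([a,b],ℝⁿ)×ℝⁿ set x(t,u',y') := y' + ∫_a^t ((t−s)^{α−1}/Γ(α)) u'(s) ds and 𝓛(u',y') := φ(y', x(b,u',y')) + ∫_a^b ((b−s)^{β−1}/Γ(β)) L( x(s,u',y'), u'(s), s ) ds. Suppose (u,y) ∈ L^∞([a,b],ℝⁿ)×ℝⁿ satisfies 𝓛(u,y) ≤ 𝓛(u',y') for all (u',y') ∈ L^∞([a,b],ℝⁿ)×ℝⁿ, and write x := x(·,u,y) and p̃(s) := ((b−s)^{β−1}/Γ(β)) ∂₂L(x(s),u(s),s). Then there exists an absolutely continuous function q : [a,b] → ℝⁿ with q(t) = ∫_t^b ((s−t)^{−α}/Γ(1−α)) p̃(s) ds for almost every t ∈ [a,b] when α < 1 (and q(t) = p̃(t) for almost every t when α = 1), such that q(a) = ∂₁φ(x(a),x(b)) and −q(b) = ∂₂φ(x(a),x(b)). -/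

import Mathlib

open MeasureTheory Set
open scoped RealInnerProductSpace

/-- The trajectory `x(·,u,y)` associated with a Caputo fractional derivative `u`
of order `α` and initial condition `y`. -/
noncomputable def traj (n : ℕ) (a α : ℝ) (u : ℝ → EuclideanSpace ℝ (Fin n))
    (y : EuclideanSpace ℝ (Fin n)) (t : ℝ) : EuclideanSpace ℝ (Fin n) :=
  y + ∫ s in a..t, ((t - s) ^ (α - 1) / Real.Gamma α) • u s

/-- The Bolza functional. -/
noncomputable def bolza (n : ℕ) (a b α β : ℝ)
    (φ : EuclideanSpace ℝ (Fin n) × EuclideanSpace ℝ (Fin n) → ℝ)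
    (L : EuclideanSpace ℝ (Fin n) × EuclideanSpace ℝ (Fin n) × ℝ → ℝ)
    (u : ℝ → EuclideanSpace ℝ (Fin n)) (y : EuclideanSpace ℝ (Fin n)) : ℝ :=
  φ (y, traj n a α u y b) +
    ∫ s in a..b, ((b - s) ^ (β - 1) / Real.Gamma β) * L (traj n a α u y s, u s, s)

/-- Membership in `L^∞([a,b],ℝⁿ)` (a measurable, essentially bounded representative). -/
def admissible (n : ℕ) (a b : ℝ) (u : ℝ → EuclideanSpace ℝ (Fin n)) : Prop :=
  Measurable u ∧ ∃ C : ℝ, ∀ᵐ s ∂(volume : Measure ℝ), s ∈ Icc a b → ‖u s‖ ≤ C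

/-!
Write `k_γ(s) = (b - s) ^ (γ - 1) / Γ(γ)` and `I^γ` for the right-sided fractional integral of order
`γ`. At a minimiser the first variation of the functional vanishes in every direction. Varying only
the control and integrating by parts (Fubini on a triangle) gives the Euler equation
`k_β ∂₂L = -(k_α ∂₂φ + I^α (k_β ∂₁L))` almost everywhere. By the Beta integral the kernels satisfy
the semigroup law, so applying `I^(1-α)` turns the right-hand side into
`q(t) = -∂₂φ - ∫_t^b k_β ∂₁L`, which is absolutely continuous with `-q(b) = ∂₂φ`. Varying only the
initial point gives `∂₁φ + ∂₂φ + ∫_a^b k_β ∂₁L = 0`, that is, `q(a) = ∂₁φ`.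
-/

section RiemannLiouville

variable {E : Type*} [NormedAddCommGroup E] [NormedSpace ℝ E] {a b γ δ : ℝ}

/-- The convolution kernel `t ^ (γ - 1) / Γ(γ)`, `t > 0`, of fractional integration of order `γ`.
Its values for `t ≤ 0` are junk. -/
noncomputable def rlKernel (γ t : ℝ) : ℝ :=
  t ^ (γ - 1) / Real.Gamma γ

/-- The left-sided Riemann–Liouville integral of order `γ` with base point `a`. -/
noncomputable def leftRL (γ a : ℝ) (f : ℝ → E) (t : ℝ) : E :=
  ∫ s in a..t, rlKernel γ (t - s) • f s

/-- The right-sided Riemann–Liouville integral of order `γ` with base point `b`. -/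
noncomputable def rightRL (γ b : ℝ) (f : ℝ → E) (t : ℝ) : E :=
  ∫ s in t..b, rlKernel γ (s - t) • f s

@[fun_prop]
theorem measurable_rlKernel (γ : ℝ) : Measurable (rlKernel γ) := by
  unfold rlKernel
  fun_prop

@[simp]
theorem rlKernel_one (t : ℝ) : rlKernel 1 t = 1 := by
  simp [rlKernel]

theorem rlKernel_nonneg (hγ : 0 < γ) {t : ℝ} (ht : 0 ≤ t) : 0 ≤ rlKernel γ t :=
  div_nonneg (Real.rpow_nonneg ht _) (Real.Gamma_pos_of_pos hγ).le

theorem rlKernel_pos (hγ : 0 < γ) {t : ℝ} (ht : 0 < t) : 0 < rlKernel γ t :=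
  div_pos (Real.rpow_pos_of_pos ht _) (Real.Gamma_pos_of_pos hγ)

theorem rlKernel_le_rlKernel (hγ : 1 ≤ γ) {s t : ℝ} (hs : 0 ≤ s) (hst : s ≤ t) :
    rlKernel γ s ≤ rlKernel γ t := by
  have := Real.Gamma_pos_of_pos (zero_lt_one.trans_le hγ)
  have := Real.rpow_le_rpow hs hst (sub_nonneg.2 hγ)
  unfold rlKernel
  gcongr

theorem integral_rpow_mul_sub_rpow (hγ : 0 < γ) (hδ : 0 < δ) {c : ℝ} (hc : 0 < c) :
    ∫ x in 0..c, x ^ (γ - 1) * (c - x) ^ (δ - 1) =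
      c ^ (γ + δ - 1) * ProbabilityTheory.beta γ δ := by
  have hscaled := congrArg Complex.re (Complex.betaIntegral_scaled γ δ hc)
  have hleft : ∫ x : ℝ in 0..c, (x : ℂ) ^ (γ - 1 : ℂ) * ((c : ℂ) - x) ^ (δ - 1 : ℂ) =
      ((∫ x in 0..c, x ^ (γ - 1) * (c - x) ^ (δ - 1) : ℝ) : ℂ) := by
    rw [← intervalIntegral.integral_ofReal]
    refine intervalIntegral.integral_congr fun x hx ↦ ?_
    rw [uIcc_of_le hc.le] at hx
    push_cast [Complex.ofReal_cpow hx.1, Complex.ofReal_cpow (sub_nonneg.2 hx.2)]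
    rfl
  have hright : (c : ℂ) ^ (γ + δ - 1 : ℂ) = ((c ^ (γ + δ - 1) : ℝ) : ℂ) := by
    push_cast [Complex.ofReal_cpow hc.le]
    rfl
  rwa [hleft, hright, Complex.ofReal_re, Complex.re_ofReal_mul,
    ← ProbabilityTheory.beta_eq_betaIntegralReal γ δ hγ hδ] at hscaled

theorem integral_rlKernel_mul_rlKernel (hγ : 0 < γ) (hδ : 0 < δ) {t r : ℝ} (htr : t < r) :
    ∫ s in t..r, rlKernel γ (s - t) * rlKernel δ (r - s) = rlKernel (γ + δ) (r - t) := by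
  have hγΓ := (Real.Gamma_pos_of_pos hγ).ne'
  have hδΓ := (Real.Gamma_pos_of_pos hδ).ne'
  calc ∫ s in t..r, rlKernel γ (s - t) * rlKernel δ (r - s)
      = ∫ x in 0..(r - t), rlKernel γ x * rlKernel δ (r - t - x) := by
        simpa using intervalIntegral.integral_comp_sub_right (a := t) (b := r)
          (fun x ↦ rlKernel γ x * rlKernel δ (r - t - x)) t
    _ = (∫ x in 0..(r - t), x ^ (γ - 1) * (r - t - x) ^ (δ - 1)) /
          (Real.Gamma γ * Real.Gamma δ) := by
        simp only [rlKernel, div_mul_div_comm, intervalIntegral.integral_div]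
    _ = rlKernel (γ + δ) (r - t) := by
        rw [integral_rpow_mul_sub_rpow hγ hδ (sub_pos.2 htr), ProbabilityTheory.beta, rlKernel]
        field_simp

theorem intervalIntegrable_rlKernel_mul_rlKernel (hγ : 0 < γ) (hδ : 0 < δ) {t r : ℝ}
    (htr : t < r) :
    IntervalIntegrable (fun s ↦ rlKernel γ (s - t) * rlKernel δ (r - s)) volume t r := by
  refine intervalIntegral.intervalIntegrable_of_integral_ne_zero ?_
  rw [integral_rlKernel_mul_rlKernel hγ hδ htr]
  exact (rlKernel_pos (add_pos hγ hδ) (sub_pos.2 htr)).ne'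

theorem integral_rlKernel_sub (hγ : 0 < γ) {a t : ℝ} (hat : a < t) :
    ∫ s in a..t, rlKernel γ (t - s) = rlKernel (1 + γ) (t - a) := by
  simpa using integral_rlKernel_mul_rlKernel one_pos hγ hat

theorem intervalIntegrable_rlKernel_sub (hγ : 0 < γ) {a t : ℝ} (hat : a ≤ t) :
    IntervalIntegrable (fun s ↦ rlKernel γ (t - s)) volume a t := by
  obtain rfl | hat := hat.eq_or_lt
  · exact .refl
  · simpa using intervalIntegrable_rlKernel_mul_rlKernel one_pos hγ hat

end RiemannLiouville

section Triangle

variable {E : Type*} [NormedAddCommGroup E] {a b : ℝ}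

/-- Lebesgue measure on the triangle of all `(s, τ)` with `a < τ ≤ s ≤ b`, used to exchange
iterated integrals. -/
noncomputable def triangleMeasure (a b : ℝ) : Measure (ℝ × ℝ) :=
  ((volume.restrict (Ioc a b)).prod (volume.restrict (Ioc a b))).restrict {p | p.2 ≤ p.1}

theorem measurableSet_snd_le_fst : MeasurableSet {p : ℝ × ℝ | p.2 ≤ p.1} :=
  measurableSet_le measurable_snd measurable_fst

theorem integrable_triangleMeasure_iff {f : ℝ → ℝ → E} :
    Integrable (Function.uncurry f) (triangleMeasure a b) ↔
      Integrable ({p : ℝ × ℝ | p.2 ≤ p.1}.indicator (Function.uncurry f))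
        ((volume.restrict (Ioc a b)).prod (volume.restrict (Ioc a b))) :=
  (integrable_indicator_iff measurableSet_snd_le_fst).symm

theorem indicator_snd_le_fst_left (f : ℝ → ℝ → E) (s : ℝ) :
    (fun τ ↦ {p : ℝ × ℝ | p.2 ≤ p.1}.indicator (Function.uncurry f) (s, τ)) =
      (Iic s).indicator (f s) :=
  rfl

theorem indicator_snd_le_fst_right (f : ℝ → ℝ → E) (τ : ℝ) :
    (fun s ↦ {p : ℝ × ℝ | p.2 ≤ p.1}.indicator (Function.uncurry f) (s, τ)) =
      (Ici τ).indicator (f · τ) :=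
  rfl

theorem restrict_Ioc_restrict_Iic {s : ℝ} (hs : s ∈ Ioc a b) :
    (volume.restrict (Ioc a b)).restrict (Iic s) = volume.restrict (Ioc a s) := by
  rw [Measure.restrict_restrict measurableSet_Iic, inter_comm, Ioc_inter_Iic, min_eq_right hs.2]

theorem restrict_Ioc_restrict_Ici {τ : ℝ} (hτ : τ ∈ Ioc a b) :
    (volume.restrict (Ioc a b)).restrict (Ici τ) = volume.restrict (Ioc τ b) := by
  have hset : Ici τ ∩ Ioc a b = Icc τ b := by
    ext x
    exact ⟨fun h ↦ ⟨h.1, h.2.2⟩, fun h ↦ ⟨h.1, hτ.1.trans_le h.1, h.2⟩⟩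
  rw [Measure.restrict_restrict measurableSet_Ici, hset, restrict_Ioc_eq_restrict_Icc]

theorem ae_integrableOn_right_of_triangleMeasure {f : ℝ → ℝ → E}
    (hf : Integrable (Function.uncurry f) (triangleMeasure a b)) :
    ∀ᵐ τ ∂volume.restrict (Ioc a b), IntegrableOn (f · τ) (Ioc τ b) := by
  filter_upwards [(integrable_triangleMeasure_iff.1 hf).prod_left_ae,
    ae_restrict_mem measurableSet_Ioc] with τ hint hτ
  rwa [indicator_snd_le_fst_right, integrable_indicator_iff measurableSet_Ici, IntegrableOn,
    restrict_Ioc_restrict_Ici hτ] at hint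

theorem memLp_top_snd_triangleMeasure {v : ℝ → E} (hv : MemLp v ⊤ (volume.restrict (Ioc a b))) :
    MemLp (fun p : ℝ × ℝ ↦ v p.2) ⊤ (triangleMeasure a b) :=
  (hv.comp_snd _).restrict _

variable [NormedSpace ℝ E]

theorem integral_indicator_snd_le_fst_left (f : ℝ → ℝ → E) {s : ℝ} (hs : s ∈ Ioc a b) :
    ∫ τ in Ioc a b, {p : ℝ × ℝ | p.2 ≤ p.1}.indicator (Function.uncurry f) (s, τ) =
      ∫ τ in a..s, f s τ := by
  rw [indicator_snd_le_fst_left, integral_indicator measurableSet_Iic,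
    restrict_Ioc_restrict_Iic hs, intervalIntegral.integral_of_le hs.1.le]

theorem integral_indicator_snd_le_fst_right (f : ℝ → ℝ → E) {τ : ℝ} (hτ : τ ∈ Ioc a b) :
    ∫ s in Ioc a b, {p : ℝ × ℝ | p.2 ≤ p.1}.indicator (Function.uncurry f) (s, τ) =
      ∫ s in τ..b, f s τ := by
  rw [indicator_snd_le_fst_right, integral_indicator measurableSet_Ici,
    restrict_Ioc_restrict_Ici hτ, intervalIntegral.integral_of_le hτ.2]

theorem integrableOn_integral_left_of_triangleMeasure {f : ℝ → ℝ → E}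
    (hf : Integrable (Function.uncurry f) (triangleMeasure a b)) :
    IntegrableOn (fun s ↦ ∫ τ in a..s, f s τ) (Ioc a b) := by
  refine (integrable_triangleMeasure_iff.1 hf).integral_prod_left.congr ?_
  filter_upwards [ae_restrict_mem measurableSet_Ioc] with s hs
  exact integral_indicator_snd_le_fst_left f hs

theorem integrableOn_integral_right_of_triangleMeasure {f : ℝ → ℝ → E}
    (hf : Integrable (Function.uncurry f) (triangleMeasure a b)) :
    IntegrableOn (fun τ ↦ ∫ s in τ..b, f s τ) (Ioc a b) := by
  refine (integrable_triangleMeasure_iff.1 hf).integral_prod_right.congr ?_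
  filter_upwards [ae_restrict_mem measurableSet_Ioc] with τ hτ
  exact integral_indicator_snd_le_fst_right f hτ

theorem integral_integral_swap_of_triangleMeasure (hab : a ≤ b) {f : ℝ → ℝ → E}
    (hf : Integrable (Function.uncurry f) (triangleMeasure a b)) :
    ∫ s in a..b, ∫ τ in a..s, f s τ = ∫ τ in a..b, ∫ s in τ..b, f s τ := by
  rw [intervalIntegral.integral_of_le hab, intervalIntegral.integral_of_le hab,
    ← setIntegral_congr_fun measurableSet_Ioc fun s hs ↦ integral_indicator_snd_le_fst_left f hs,
    ← setIntegral_congr_fun measurableSet_Ioc fun τ hτ ↦ integral_indicator_snd_le_fst_right f hτ]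
  exact integral_integral_swap (integrable_triangleMeasure_iff.1 hf)

theorem integrable_triangleMeasure_smul {w : ℝ → ℝ → ℝ} (hw : Measurable (Function.uncurry w))
    (hw0 : ∀ s ∈ Ioc a b, ∀ τ ∈ Ioc a s, 0 ≤ w s τ)
    (hwi : ∀ s ∈ Ioc a b, IntervalIntegrable (w s) volume a s) {C : ℝ}
    (hC : ∀ s ∈ Ioc a b, ∫ τ in a..s, w s τ ≤ C) {f : ℝ → E} (hf : IntegrableOn f (Ioc a b)) :
    Integrable (Function.uncurry fun s τ ↦ w s τ • f s) (triangleMeasure a b) := by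
  have hmeas : AEStronglyMeasurable ({p : ℝ × ℝ | p.2 ≤ p.1}.indicator
      (Function.uncurry fun s τ ↦ w s τ • f s))
      ((volume.restrict (Ioc a b)).prod (volume.restrict (Ioc a b))) :=
    (hw.aestronglyMeasurable.smul hf.aestronglyMeasurable.comp_fst).indicator
      measurableSet_snd_le_fst
  have hnorm : ∀ s ∈ Ioc a b,
      ∫ τ in Ioc a b, ‖{p : ℝ × ℝ | p.2 ≤ p.1}.indicator
        (Function.uncurry fun s τ ↦ w s τ • f s) (s, τ)‖ = (∫ τ in a..s, w s τ) * ‖f s‖ := by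
    intro s hs
    simp only [norm_indicator_eq_indicator_norm]
    refine (integral_indicator_snd_le_fst_left (fun s τ ↦ ‖w s τ • f s‖) hs).trans ?_
    rw [← intervalIntegral.integral_mul_const, intervalIntegral.integral_of_le hs.1.le,
      intervalIntegral.integral_of_le hs.1.le]
    refine setIntegral_congr_fun measurableSet_Ioc fun τ hτ ↦ ?_
    rw [norm_smul, Real.norm_of_nonneg (hw0 s hs τ hτ)]
  rw [integrable_triangleMeasure_iff, integrable_prod_iff hmeas]
  constructor
  · filter_upwards [ae_restrict_mem measurableSet_Ioc] with s hs
    rw [indicator_snd_le_fst_left, integrable_indicator_iff measurableSet_Iic, IntegrableOn,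
      restrict_Ioc_restrict_Iic hs]
    exact (hwi s hs).1.smul_const (f s)
  · refine (hf.norm.const_mul C).mono' hmeas.norm.integral_prod_right' ?_
    filter_upwards [ae_restrict_mem measurableSet_Ioc] with s hs
    rw [hnorm s hs, Real.norm_of_nonneg]
    · exact mul_le_mul_of_nonneg_right (hC s hs) (norm_nonneg _)
    · rw [intervalIntegral.integral_of_le hs.1.le]
      exact mul_nonneg (setIntegral_nonneg measurableSet_Ioc (hw0 s hs)) (norm_nonneg _)

end Triangle

section FractionalIntegration

variable {E : Type*} [NormedAddCommGroup E] [NormedSpace ℝ E] {a b γ δ : ℝ}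

theorem integral_rlKernel_sub_le (hγ : 0 < γ) {s : ℝ} (hs : s ∈ Ioc a b) :
    ∫ τ in a..s, rlKernel γ (s - τ) ≤ rlKernel (1 + γ) (b - a) := by
  rw [integral_rlKernel_sub hγ hs.1]
  exact rlKernel_le_rlKernel (by linarith) (by linarith [hs.1]) (by linarith [hs.2])

theorem integrable_rlKernel_sub_smul (hγ : 0 < γ) {P : ℝ → E} (hP : IntegrableOn P (Ioc a b)) :
    Integrable (Function.uncurry fun s τ ↦ rlKernel γ (s - τ) • P s) (triangleMeasure a b) :=
  integrable_triangleMeasure_smul (by unfold Function.uncurry; fun_prop)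
    (fun _ _ _ hτ ↦ rlKernel_nonneg hγ (sub_nonneg.2 hτ.2))
    (fun _ hs ↦ intervalIntegrable_rlKernel_sub hγ hs.1.le)
    (fun _ hs ↦ integral_rlKernel_sub_le hγ hs) hP

theorem intervalIntegrable_rlKernel_sub_smul (hγ : 0 < γ) {v : ℝ → E}
    (hv : MemLp v ⊤ (volume.restrict (Ioc a b))) {t : ℝ} (ht : t ∈ Icc a b) :
    IntervalIntegrable (fun s ↦ rlKernel γ (t - s) • v s) volume a t := by
  rw [intervalIntegrable_iff_integrableOn_Ioc_of_le ht.1]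
  exact (intervalIntegrable_rlKernel_sub hγ ht.1).1.smul_of_top_left
    (hv.mono_measure (Measure.restrict_mono_set _ (Ioc_subset_Ioc_right ht.2)))

theorem norm_leftRL_le (hγ : 0 < γ) {v : ℝ → E} (hv : MemLp v ⊤ (volume.restrict (Ioc a b)))
    {t : ℝ} (ht : t ∈ Ioc a b) :
    ‖leftRL γ a v t‖ ≤ rlKernel (1 + γ) (b - a) * lpNorm v ⊤ (volume.restrict (Ioc a b)) := by
  have hbound : ∀ᵐ s, s ∈ Ioc a t → ‖rlKernel γ (t - s) • v s‖ ≤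
      rlKernel γ (t - s) * lpNorm v ⊤ (volume.restrict (Ioc a b)) := by
    filter_upwards [ae_imp_of_ae_restrict (ae_le_lpNorm_exponent_top hv)] with s hs hst
    have hker := rlKernel_nonneg hγ (sub_nonneg.2 hst.2)
    rw [norm_smul, Real.norm_of_nonneg hker]
    exact mul_le_mul_of_nonneg_left (hs ⟨hst.1, hst.2.trans ht.2⟩) hker
  calc ‖leftRL γ a v t‖
      ≤ ∫ s in a..t, rlKernel γ (t - s) * lpNorm v ⊤ (volume.restrict (Ioc a b)) :=
        intervalIntegral.norm_integral_le_of_norm_le ht.1.le hbound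
          ((intervalIntegrable_rlKernel_sub hγ ht.1.le).mul_const _)
    _ ≤ rlKernel (1 + γ) (b - a) * lpNorm v ⊤ (volume.restrict (Ioc a b)) := by
        rw [intervalIntegral.integral_mul_const]
        exact mul_le_mul_of_nonneg_right (integral_rlKernel_sub_le hγ ht) lpNorm_nonneg

theorem memLp_top_leftRL (hγ : 0 < γ) {v : ℝ → E} (hv : MemLp v ⊤ (volume.restrict (Ioc a b))) :
    MemLp (leftRL γ a v) ⊤ (volume.restrict (Ioc a b)) := by
  have hker : Integrable (fun p : ℝ × ℝ ↦ rlKernel γ (p.1 - p.2)) (triangleMeasure a b) := by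
    have hone : IntegrableOn (fun _ ↦ (1 : ℝ)) (Ioc a b) := integrable_const _
    simpa [Function.uncurry_def] using integrable_rlKernel_sub_smul hγ hone
  have hint : IntegrableOn (leftRL γ a v) (Ioc a b) :=
    integrableOn_integral_left_of_triangleMeasure
      (f := fun s τ ↦ rlKernel γ (s - τ) • v τ)
      (hker.smul_of_top_left (memLp_top_snd_triangleMeasure hv))
  refine memLp_top_of_bound hint.aestronglyMeasurable
    (rlKernel (1 + γ) (b - a) * lpNorm v ⊤ (volume.restrict (Ioc a b))) ?_
  filter_upwards [ae_restrict_mem measurableSet_Ioc] with t ht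
  exact norm_leftRL_le hγ hv ht

theorem integrableOn_rightRL (hγ : 0 < γ) {P : ℝ → E} (hP : IntegrableOn P (Ioc a b)) :
    IntegrableOn (rightRL γ b P) (Ioc a b) :=
  integrableOn_integral_right_of_triangleMeasure (integrable_rlKernel_sub_smul hγ hP)

theorem rightRL_rlKernel_smul [CompleteSpace E] (hγ : 0 < γ) (hδ : 0 < δ) (c : E) {t : ℝ}
    (ht : t < b) :
    rightRL γ b (fun s ↦ rlKernel δ (b - s) • c) t = rlKernel (γ + δ) (b - t) • c := by
  simp only [rightRL, smul_smul, intervalIntegral.integral_smul_const,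
    integral_rlKernel_mul_rlKernel hγ hδ ht]

theorem integrable_rlKernel_mul_rlKernel_smul (hγ : 0 < γ) (hδ : 0 < δ) (hγδ : 1 ≤ γ + δ) {t : ℝ}
    {P : ℝ → E} (hP : IntegrableOn P (Ioc t b)) :
    Integrable (Function.uncurry fun r s ↦ (rlKernel γ (s - t) * rlKernel δ (r - s)) • P r)
      (triangleMeasure t b) := by
  refine integrable_triangleMeasure_smul (by unfold Function.uncurry; fun_prop)
    (fun r _ s hs ↦ mul_nonneg (rlKernel_nonneg hγ (sub_nonneg.2 hs.1.le))
      (rlKernel_nonneg hδ (sub_nonneg.2 hs.2)))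
    (fun r hr ↦ intervalIntegrable_rlKernel_mul_rlKernel hγ hδ hr.1)
    (C := rlKernel (γ + δ) (b - t)) (fun r hr ↦ ?_) hP
  rw [integral_rlKernel_mul_rlKernel hγ hδ hr.1]
  exact rlKernel_le_rlKernel hγδ (sub_nonneg.2 hr.1.le) (by linarith [hr.2])

theorem smul_rightRL (c : ℝ) (P : ℝ → E) (s : ℝ) :
    c • rightRL δ b P s = ∫ r in s..b, (c * rlKernel δ (r - s)) • P r := by
  simp only [rightRL, ← intervalIntegral.integral_smul, smul_smul]

theorem rightRL_rightRL [CompleteSpace E] (hγ : 0 < γ) (hδ : 0 < δ) (hγδ : 1 ≤ γ + δ)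
    {t : ℝ} (ht : t ≤ b) {P : ℝ → E} (hP : IntegrableOn P (Ioc t b)) :
    rightRL γ b (rightRL δ b P) t = rightRL (γ + δ) b P t := by
  calc rightRL γ b (rightRL δ b P) t
      = ∫ s in t..b, ∫ r in s..b, (rlKernel γ (s - t) * rlKernel δ (r - s)) • P r := by
        simp only [← smul_rightRL]
        rfl
    _ = ∫ r in t..b, ∫ s in t..r, (rlKernel γ (s - t) * rlKernel δ (r - s)) • P r :=
        (integral_integral_swap_of_triangleMeasure ht
          (integrable_rlKernel_mul_rlKernel_smul hγ hδ hγδ hP)).symm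
    _ = rightRL (γ + δ) b P t := by
        refine intervalIntegral.integral_congr_ae (.of_forall fun r hr ↦ ?_)
        rw [uIoc_of_le ht] at hr
        rw [intervalIntegral.integral_smul_const, integral_rlKernel_mul_rlKernel hγ hδ hr.1]

theorem intervalIntegrable_rlKernel_smul_rightRL (hγ : 0 < γ) (hδ : 0 < δ) (hγδ : 1 ≤ γ + δ)
    {t : ℝ} (ht : t ≤ b) {P : ℝ → E} (hP : IntegrableOn P (Ioc t b)) :
    IntervalIntegrable (fun s ↦ rlKernel γ (s - t) • rightRL δ b P s) volume t b := by
  simp only [smul_rightRL]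
  rw [intervalIntegrable_iff_integrableOn_Ioc_of_le ht]
  exact integrableOn_integral_right_of_triangleMeasure
    (integrable_rlKernel_mul_rlKernel_smul hγ hδ hγδ hP)

theorem rightRL_one_sub_of_abel [CompleteSpace E] {α : ℝ} (hα0 : 0 < α) (hα1 : α < 1) {c : E}
    {P Q : ℝ → E} (hP : IntegrableOn P (Ioc a b))
    (hQ : ∀ᵐ τ ∂volume.restrict (Ioc a b),
      rlKernel α (b - τ) • c + rightRL α b P τ + Q τ = 0) {t : ℝ} (ht : t ∈ Ico a b) :
    rightRL (1 - α) b Q t = -c - ∫ s in t..b, P s := by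
  have hα' := sub_pos.2 hα1
  have hP' : IntegrableOn P (Ioc t b) := hP.mono_set (Ioc_subset_Ioc_left ht.1)
  have hc : IntervalIntegrable (fun s ↦ rlKernel (1 - α) (s - t) • rlKernel α (b - s) • c)
      volume t b := by
    simp only [smul_smul]
    rw [intervalIntegrable_iff_integrableOn_Ioc_of_le ht.2.le]
    exact (intervalIntegrable_rlKernel_mul_rlKernel hα' hα0 ht.2).1.smul_const c
  have hneg : -rightRL (1 - α) b Q t = c + ∫ s in t..b, P s :=
    calc -rightRL (1 - α) b Q t
        = ∫ s in t..b, (rlKernel (1 - α) (s - t) • rlKernel α (b - s) • c +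
            rlKernel (1 - α) (s - t) • rightRL α b P s) := by
          rw [rightRL, ← intervalIntegral.integral_neg]
          refine intervalIntegral.integral_congr_ae ?_
          filter_upwards [ae_imp_of_ae_restrict hQ] with s hs hst
          rw [uIoc_of_le ht.2.le] at hst
          rw [← smul_neg, ← smul_add,
            eq_neg_of_add_eq_zero_left (hs ⟨ht.1.trans_lt hst.1, hst.2⟩)]
      _ = rightRL (1 - α) b (fun τ ↦ rlKernel α (b - τ) • c) t +
            rightRL (1 - α) b (rightRL α b P) t :=
          intervalIntegral.integral_add hc (intervalIntegrable_rlKernel_smul_rightRL hα' hα0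
            (sub_add_cancel 1 α).ge ht.2.le hP')
      _ = c + ∫ s in t..b, P s := by
          rw [rightRL_rlKernel_smul hα' hα0 c ht.2,
            rightRL_rightRL hα' hα0 (sub_add_cancel 1 α).ge ht.2.le hP', sub_add_cancel]
          simp [rightRL]
  rw [neg_eq_iff_eq_neg.1 hneg, neg_add']

end FractionalIntegration

section Variational

variable {Ω E : Type*} [MeasurableSpace Ω] {μ : Measure Ω} [NormedAddCommGroup E]
  [InnerProductSpace ℝ E] {a b γ : ℝ}

theorem integrable_inner_of_memLp_top {f g : Ω → E} (hf : Integrable f μ) (hg : MemLp g ⊤ μ) :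
    Integrable (fun ω ↦ ⟪f ω, g ω⟫) μ :=
  memLp_one_iff_integrable.1 <|
    (innerSL ℝ).memLp_of_bilin 1 (memLp_one_iff_integrable.2 hf) hg

variable [CompleteSpace E]

theorem inner_leftRL (hγ : 0 < γ) (c : E) {v : ℝ → E}
    (hv : MemLp v ⊤ (volume.restrict (Ioc a b))) {t : ℝ} (ht : t ∈ Icc a b) :
    ⟪c, leftRL γ a v t⟫ = ∫ s in a..t, ⟪rlKernel γ (t - s) • c, v s⟫ := by
  have hint := (intervalIntegrable_rlKernel_sub_smul hγ hv ht).1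
  rw [leftRL, intervalIntegral.integral_of_le ht.1, intervalIntegral.integral_of_le ht.1,
    ← integral_inner hint]
  simp only [real_inner_smul_left, real_inner_smul_right]

theorem integral_inner_leftRL (hγ : 0 < γ) (hab : a ≤ b) {P v : ℝ → E}
    (hP : IntegrableOn P (Ioc a b)) (hv : MemLp v ⊤ (volume.restrict (Ioc a b))) :
    ∫ s in a..b, ⟪P s, leftRL γ a v s⟫ = ∫ τ in a..b, ⟪rightRL γ b P τ, v τ⟫ := by
  have hker := integrable_rlKernel_sub_smul hγ hP
  have hint : Integrable (Function.uncurry fun s τ ↦ ⟪rlKernel γ (s - τ) • P s, v τ⟫)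
      (triangleMeasure a b) :=
    integrable_inner_of_memLp_top hker (memLp_top_snd_triangleMeasure hv)
  calc ∫ s in a..b, ⟪P s, leftRL γ a v s⟫
      = ∫ s in a..b, ∫ τ in a..s, ⟪rlKernel γ (s - τ) • P s, v τ⟫ := by
        refine intervalIntegral.integral_congr fun s hs ↦ ?_
        rw [uIcc_of_le hab] at hs
        exact inner_leftRL hγ (P s) hv hs
    _ = ∫ τ in a..b, ∫ s in τ..b, ⟪rlKernel γ (s - τ) • P s, v τ⟫ :=
        integral_integral_swap_of_triangleMeasure hab hint
    _ = ∫ τ in a..b, ⟪rightRL γ b P τ, v τ⟫ := by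
        refine intervalIntegral.integral_congr_ae ?_
        filter_upwards [ae_imp_of_ae_restrict (ae_integrableOn_right_of_triangleMeasure hker)]
          with τ hτint hτ
        rw [uIoc_of_le hab] at hτ
        rw [rightRL, intervalIntegral.integral_of_le hτ.2, intervalIntegral.integral_of_le hτ.2,
          real_inner_comm, ← integral_inner (hτint hτ)]
        simp only [real_inner_comm]

theorem ae_eq_zero_of_forall_integral_inner_eq_zero {F : Ω → E} (hF : Integrable F μ)
    (h : ∀ v : Ω → E, StronglyMeasurable v → (∃ C, ∀ ω, ‖v ω‖ ≤ C) → ∫ ω, ⟪F ω, v ω⟫ ∂μ = 0) :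
    F =ᵐ[μ] 0 := by
  refine hF.ae_eq_zero_of_forall_setIntegral_eq_zero fun S hS _ ↦ ext_inner_left ℝ fun e ↦ ?_
  have hS_test := h (S.indicator fun _ ↦ e) (stronglyMeasurable_const.indicator hS)
    ⟨‖e‖, norm_indicator_le_norm_self _⟩
  have hinner : (fun ω ↦ ⟪F ω, S.indicator (fun _ ↦ e) ω⟫) = S.indicator fun ω ↦ ⟪e, F ω⟫ := by
    ext ω
    by_cases hω : ω ∈ S <;> simp [hω, real_inner_comm]
  rwa [hinner, integral_indicator hS, integral_inner hF.integrableOn, ← inner_zero_right e]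
    at hS_test

theorem memLp_top_of_norm_le {H : Type*} [NormedAddCommGroup H] {v : Ω → H}
    (hv : StronglyMeasurable v) (hvC : ∃ C, ∀ ω, ‖v ω‖ ≤ C) : MemLp v ⊤ μ :=
  hvC.elim fun C hC ↦ memLp_top_of_bound hv.aestronglyMeasurable C (.of_forall hC)

theorem ae_euler_of_forall_variation (hγ : 0 < γ) (hab : a ≤ b) {c : E} {P Q : ℝ → E}
    (hP : IntegrableOn P (Ioc a b)) (hQ : IntegrableOn Q (Ioc a b))
    (h : ∀ v : ℝ → E, StronglyMeasurable v → (∃ C, ∀ s, ‖v s‖ ≤ C) →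
      ⟪c, leftRL γ a v b⟫ + ∫ s in a..b, (⟪P s, leftRL γ a v s⟫ + ⟪Q s, v s⟫) = 0) :
    ∀ᵐ τ ∂volume.restrict (Ioc a b), rlKernel γ (b - τ) • c + rightRL γ b P τ + Q τ = 0 := by
  have hc : IntegrableOn (fun τ ↦ rlKernel γ (b - τ) • c) (Ioc a b) :=
    (intervalIntegrable_rlKernel_sub hγ hab).1.smul_const c
  have hRL := integrableOn_rightRL hγ hP
  refine ae_eq_zero_of_forall_integral_inner_eq_zero ((hc.add hRL).add hQ) fun v hv hvC ↦ ?_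
  have hv' : MemLp v ⊤ (volume.restrict (Ioc a b)) := memLp_top_of_norm_le hv hvC
  have hcv := integrable_inner_of_memLp_top hc hv'
  have hRLv := integrable_inner_of_memLp_top hRL hv'
  have hcRLv : IntegrableOn (fun τ ↦ ⟪rlKernel γ (b - τ) • c, v τ⟫ + ⟪rightRL γ b P τ, v τ⟫)
      (Ioc a b) := hcv.add hRLv
  have hPv := integrable_inner_of_memLp_top hP (memLp_top_leftRL hγ hv')
  have hQv := integrable_inner_of_memLp_top hQ hv'
  have hparts := integral_inner_leftRL hγ hab hP hv'
  have hvar := h v hv hvC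
  rw [inner_leftRL hγ c hv' ⟨hab, le_rfl⟩] at hvar
  simp only [intervalIntegral.integral_of_le hab] at hparts hvar
  simp only [inner_add_left]
  rwa [integral_add hcRLv hQv, integral_add hcv hRLv, ← hparts, add_assoc,
    ← integral_add hPv hQv]

end Variational

section Superposition

variable {Ω G H : Type*} [MeasurableSpace Ω] {μ : Measure Ω} [NormedAddCommGroup G]
  [NormedAddCommGroup H] [ProperSpace G]

theorem memLp_top_comp_of_continuous {g : G → H} (hg : Continuous g) {p : Ω → G}
    (hp : MemLp p ⊤ μ) : MemLp (fun ω ↦ g (p ω)) ⊤ μ := by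
  obtain ⟨C, hC⟩ := (isCompact_closedBall (0 : G) (lpNorm p ⊤ μ)).exists_bound_of_continuousOn
    hg.continuousOn
  refine memLp_top_of_bound (hg.comp_aestronglyMeasurable hp.1) C ?_
  filter_upwards [ae_le_lpNorm_exponent_top hp] with ω hω
  exact hC _ (mem_closedBall_zero_iff.2 hω)

variable [NormedSpace ℝ G] [NormedSpace ℝ H]

theorem hasDerivAt_integral_smul_comp_add_smul {Φ : G → H} (hΦ : ContDiff ℝ 1 Φ) {k : Ω → ℝ}
    (hk : Integrable k μ) {p d : Ω → G} (hp : MemLp p ⊤ μ) (hd : MemLp d ⊤ μ) :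
    HasDerivAt (fun ε : ℝ ↦ ∫ ω, k ω • Φ (p ω + ε • d ω) ∂μ)
      (∫ ω, k ω • fderiv ℝ Φ (p ω) (d ω) ∂μ) 0 := by
  have hΦ' : Continuous (fderiv ℝ Φ) := hΦ.continuous_fderiv one_ne_zero
  obtain ⟨M, hM⟩ := (isCompact_closedBall (0 : G)
    (lpNorm p ⊤ μ + lpNorm d ⊤ μ)).exists_bound_of_continuousOn hΦ'.continuousOn
  have hint (ε : ℝ) : Integrable (fun ω ↦ k ω • Φ (p ω + ε • d ω)) μ :=
    hk.smul_of_top_left (memLp_top_comp_of_continuous hΦ.continuous (hp.add (hd.const_smul ε)))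
  have hint' : Integrable (fun ω ↦ k ω • fderiv ℝ Φ (p ω + (0 : ℝ) • d ω) (d ω)) μ := by
    simp only [zero_smul, add_zero]
    exact hk.smul_of_top_left (memLp_top_comp_of_continuous
      (g := fun x : G × G ↦ fderiv ℝ Φ x.1 x.2) (p := fun ω ↦ (p ω, d ω)) (by fun_prop)
      (memLp_prod_iff.2 ⟨hp, hd⟩))
  have hbound : ∀ᵐ ω ∂μ, ∀ ε ∈ Metric.ball (0 : ℝ) 1,
      ‖k ω • fderiv ℝ Φ (p ω + ε • d ω) (d ω)‖ ≤ ‖k ω‖ * (M * lpNorm d ⊤ μ) := by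
    filter_upwards [ae_le_lpNorm_exponent_top hp, ae_le_lpNorm_exponent_top hd] with ω hpω hdω ε hε
    have hε1 : ‖ε‖ ≤ 1 := (mem_ball_zero_iff.1 hε).le
    have hmem : p ω + ε • d ω ∈ Metric.closedBall (0 : G) (lpNorm p ⊤ μ + lpNorm d ⊤ μ) := by
      refine mem_closedBall_zero_iff.2 (norm_add_le_of_le hpω ?_)
      rw [norm_smul]
      exact (mul_le_of_le_one_left (norm_nonneg _) hε1).trans hdω
    rw [norm_smul]
    gcongr
    exact ContinuousLinearMap.le_of_opNorm_le_of_le _ (hM _ hmem) hdω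
  have hderiv (ω : Ω) (ε : ℝ) : HasDerivAt (fun ε ↦ k ω • Φ (p ω + ε • d ω))
      (k ω • fderiv ℝ Φ (p ω + ε • d ω) (d ω)) ε := by
    have hline : HasDerivAt (fun ε : ℝ ↦ p ω + ε • d ω) (d ω) ε := by
      simpa using ((hasDerivAt_id ε).smul_const (d ω)).const_add (p ω)
    exact (((hΦ.differentiable one_ne_zero _).hasFDerivAt.comp_hasDerivAt ε hline)).const_smul _
  simpa using (hasDerivAt_integral_of_dominated_loc_of_deriv_le
    (Metric.ball_mem_nhds (0 : ℝ) one_pos) (.of_forall fun ε ↦ (hint ε).aestronglyMeasurable)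
    (hint 0) hint'.aestronglyMeasurable hbound (hk.norm.mul_const _)
    (.of_forall fun ω ε _ ↦ hderiv ω ε)).2

end Superposition

section Gradient

variable {Ω E F G : Type*} [MeasurableSpace Ω] {μ : Measure Ω} [NormedAddCommGroup E]
  [InnerProductSpace ℝ E] [CompleteSpace E] [NormedAddCommGroup F] [InnerProductSpace ℝ F]
  [CompleteSpace F] [NormedAddCommGroup G] [NormedSpace ℝ G]

theorem gradient_comp_eq_toDual_symm {f : G → ℝ} {c : E → G} {c' : E →L[ℝ] G} {x : E}
    (hf : DifferentiableAt ℝ f (c x)) (hc : HasFDerivAt c c' x) :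
    gradient (fun z ↦ f (c z)) x =
      (InnerProductSpace.toDual ℝ E).symm ((fderiv ℝ f (c x)).comp c') :=
  (hf.hasFDerivAt.comp x hc).hasGradientAt.gradient

theorem inner_gradient_comp_left {f : G → ℝ} {c : E → G} {c' : E →L[ℝ] G} {x : E}
    (hf : DifferentiableAt ℝ f (c x)) (hc : HasFDerivAt c c' x) (w : E) :
    ⟪gradient (fun z ↦ f (c z)) x, w⟫ = fderiv ℝ f (c x) (c' w) := by
  rw [gradient_comp_eq_toDual_symm hf hc, InnerProductSpace.toDual_symm_apply]
  rfl

theorem fderiv_prodMk_apply_eq_inner_gradient {f : E × F → ℝ} {x : E} {y : F}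
    (hf : DifferentiableAt ℝ f (x, y)) (w : E) (v : F) :
    fderiv ℝ f (x, y) (w, v) =
      ⟪gradient (fun z ↦ f (z, y)) x, w⟫ + ⟪gradient (fun z ↦ f (x, z)) y, v⟫ := by
  rw [inner_gradient_comp_left (c := fun z ↦ (z, y)) hf (hasFDerivAt_prodMk_left x y),
    inner_gradient_comp_left (c := fun z ↦ (x, z)) hf (hasFDerivAt_prodMk_right x y), ← map_add]
  simp

theorem fderiv_prodMk_prodMk_apply_eq_inner_gradient {f : E × F × G → ℝ} {x : E} {u : F} {s : G}
    (hf : DifferentiableAt ℝ f (x, u, s)) (w : E) (v : F) :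
    fderiv ℝ f (x, u, s) (w, v, 0) =
      ⟪gradient (fun z ↦ f (z, u, s)) x, w⟫ + ⟪gradient (fun z ↦ f (x, z, s)) u, v⟫ := by
  rw [inner_gradient_comp_left (c := fun z ↦ (z, u, s)) hf (hasFDerivAt_prodMk_left x (u, s)),
    inner_gradient_comp_left (c := fun z ↦ (x, z, s)) hf
      ((hasFDerivAt_prodMk_right x (u, s)).comp u (hasFDerivAt_prodMk_left u s)), ← map_add]
  simp

theorem memLp_top_gradient_comp [ProperSpace G] {f : G → ℝ} (hf : ContDiff ℝ 1 f)
    {c : Ω → E → G} {c' : E →L[ℝ] G} {z : Ω → E} (hc : ∀ ω, HasFDerivAt (c ω) c' (z ω))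
    (hz : MemLp (fun ω ↦ c ω (z ω)) ⊤ μ) :
    MemLp (fun ω ↦ gradient (fun x ↦ f (c ω x)) (z ω)) ⊤ μ := by
  simp only [gradient_comp_eq_toDual_symm (hf.differentiable one_ne_zero _) (hc _)]
  exact memLp_top_comp_of_continuous
    (g := fun x ↦ (InnerProductSpace.toDual ℝ E).symm ((fderiv ℝ f x).comp c')) (by fun_prop) hz

end Gradient

section Caputo

variable {E : Type*} [NormedAddCommGroup E] {a b α β : ℝ}

theorem memLp_top_prodMk_prodMk_id {x u : ℝ → E} (hx : MemLp x ⊤ (volume.restrict (Ioc a b)))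
    (hu : MemLp u ⊤ (volume.restrict (Ioc a b))) :
    MemLp (fun s ↦ (x s, u s, s)) ⊤ (volume.restrict (Ioc a b)) := by
  have hid : MemLp (fun s : ℝ ↦ s) ⊤ (volume.restrict (Ioc a b)) :=
    memLp_of_bounded ((ae_restrict_mem measurableSet_Ioc).mono fun _ hs ↦ ⟨hs.1.le, hs.2⟩)
      aestronglyMeasurable_id _
  exact memLp_prod_iff.2 ⟨hx, memLp_prod_iff.2 ⟨hu, hid⟩⟩

variable [NormedSpace ℝ E]

/-- The trajectory with initial value `y` at time `a` and Caputo derivative `u` of order `α`. -/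
noncomputable def caputoTraj (a α : ℝ) (u : ℝ → E) (y : E) (t : ℝ) : E :=
  y + leftRL α a u t

/-- The Bolza functional with terminal cost `φ` and running cost `L`, the latter integrated with
order `β`, along the trajectories `caputoTraj`. -/
noncomputable def caputoBolza (a b α β : ℝ) (φ : E × E → ℝ)
    (L : E × E × ℝ → ℝ) (u : ℝ → E) (y : E) : ℝ :=
  φ (y, caputoTraj a α u y b) +
    ∫ s in a..b, rlKernel β (b - s) * L (caputoTraj a α u y s, u s, s)

@[simp]
theorem caputoTraj_left (a α : ℝ) (u : ℝ → E) (y : E) :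
    caputoTraj a α u y a = y := by
  simp [caputoTraj, leftRL]

theorem caputoTraj_zero_left (a α : ℝ) (y : E) (t : ℝ) :
    caputoTraj a α 0 y t = y := by
  simp [caputoTraj, leftRL]

theorem caputoTraj_zero_right (a α : ℝ) (u : ℝ → E) (t : ℝ) :
    caputoTraj a α u 0 t = leftRL α a u t :=
  zero_add _

theorem memLp_top_caputoTraj (hα : 0 < α) {u : ℝ → E}
    (hu : MemLp u ⊤ (volume.restrict (Ioc a b))) (y : E) :
    MemLp (caputoTraj a α u y) ⊤ (volume.restrict (Ioc a b)) :=
  (memLp_const y).add (memLp_top_leftRL hα hu)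

theorem caputoTraj_add_smul (hα : 0 < α) {u v : ℝ → E}
    (hu : MemLp u ⊤ (volume.restrict (Ioc a b))) (hv : MemLp v ⊤ (volume.restrict (Ioc a b)))
    (y h : E) (ε : ℝ) {t : ℝ} (ht : t ∈ Icc a b) :
    caputoTraj a α (fun s ↦ u s + ε • v s) (y + ε • h) t =
      caputoTraj a α u y t + ε • caputoTraj a α v h t := by
  have hint : leftRL α a (fun s ↦ u s + ε • v s) t = leftRL α a u t + ε • leftRL α a v t := by
    have hεv : IntervalIntegrable (fun s ↦ ε • rlKernel α (t - s) • v s) volume a t :=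
      (intervalIntegrable_rlKernel_sub_smul hα hv ht).smul ε
    simp only [leftRL, smul_add, smul_comm _ ε]
    rw [intervalIntegral.integral_add (intervalIntegrable_rlKernel_sub_smul hα hu ht) hεv,
      intervalIntegral.integral_smul]
  rw [caputoTraj, hint, caputoTraj, caputoTraj, smul_add]
  abel

theorem hasDerivAt_caputoBolza [ProperSpace E] (hα : 0 < α) (hβ : 0 < β) (hab : a ≤ b)
    {φ : E × E → ℝ} {L : E × E × ℝ → ℝ} (hL : ContDiff ℝ 1 L) {u v : ℝ → E} {y : E}
    (hφ : DifferentiableAt ℝ φ (y, caputoTraj a α u y b))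
    (hu : MemLp u ⊤ (volume.restrict (Ioc a b))) (hv : MemLp v ⊤ (volume.restrict (Ioc a b)))
    (h : E) :
    HasDerivAt (fun ε : ℝ ↦ caputoBolza a b α β φ L (fun s ↦ u s + ε • v s) (y + ε • h))
      (fderiv ℝ φ (y, caputoTraj a α u y b) (h, caputoTraj a α v h b) +
        ∫ s in a..b, rlKernel β (b - s) *
          fderiv ℝ L (caputoTraj a α u y s, u s, s) (caputoTraj a α v h s, v s, 0)) 0 := by
  set x := caputoTraj a α u y
  set w := caputoTraj a α v h
  have hx := memLp_top_caputoTraj hα hu y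
  have hw := memLp_top_caputoTraj hα hv h
  have hterminal : HasDerivAt (fun ε : ℝ ↦ φ ((y, x b) + ε • (h, w b)))
      (fderiv ℝ φ (y, x b) (h, w b)) 0 :=
    hφ.hasFDerivAt.hasLineDerivAt (h, w b)
  have hrunning := hasDerivAt_integral_smul_comp_add_smul hL
    (intervalIntegrable_rlKernel_sub hβ hab).1 (memLp_top_prodMk_prodMk_id hx hu)
    (d := fun s ↦ (w s, v s, (0 : ℝ))) (memLp_prod_iff.2 ⟨hw, memLp_prod_iff.2 ⟨hv, MemLp.zero'⟩⟩)
  rw [intervalIntegral.integral_of_le hab]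
  refine (hterminal.add hrunning).congr_of_eventuallyEq (.of_forall fun ε ↦ ?_)
  have htraj {t : ℝ} (ht : t ∈ Icc a b) := caputoTraj_add_smul hα hu hv y h ε ht
  simp only [caputoBolza, Pi.add_apply]
  rw [htraj ⟨hab, le_rfl⟩, intervalIntegral.integral_of_le hab]
  congr 1
  refine setIntegral_congr_fun measurableSet_Ioc fun s hs ↦ ?_
  simp [htraj (Ioc_subset_Icc_self hs), w]

end Caputo

section Costate

variable {E : Type*} [NormedAddCommGroup E] [InnerProductSpace ℝ E] [CompleteSpace E]
  {a b α : ℝ}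

theorem add_integral_eq_zero_of_forall_inner {Ω : Type*} [MeasurableSpace Ω] {μ : Measure Ω}
    {c : E} {P : Ω → E} (hP : Integrable P μ) (h : ∀ e, ⟪c, e⟫ + ∫ ω, ⟪P ω, e⟫ ∂μ = 0) :
    c + ∫ ω, P ω ∂μ = 0 := by
  refine ext_inner_left ℝ fun e ↦ ?_
  have he := h e
  simp only [real_inner_comm e] at he
  rwa [integral_inner hP, ← inner_add_right, ← inner_zero_right e] at he

theorem exists_costate_of_forall_variation (hα : 0 < α) (hab : a < b) {c₁ c₂ : E} {P Q : ℝ → E}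
    (hP : IntegrableOn P (Ioc a b)) (hQ : IntegrableOn Q (Ioc a b))
    (hvar : ∀ v : ℝ → E, StronglyMeasurable v → (∃ C, ∀ s, ‖v s‖ ≤ C) → ∀ h : E,
      ⟪c₁, h⟫ + ⟪c₂, caputoTraj a α v h b⟫ +
        ∫ s in a..b, (⟪P s, caputoTraj a α v h s⟫ + ⟪Q s, v s⟫) = 0) :
    ∃ q g : ℝ → E, IntervalIntegrable g volume a b ∧
      (∀ t ∈ Icc a b, q t = q a + ∫ s in a..t, g s) ∧
      (α < 1 → ∀ᵐ t ∂volume.restrict (Icc a b), q t = rightRL (1 - α) b Q t) ∧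
      (α = 1 → ∀ᵐ t ∂volume.restrict (Icc a b), q t = Q t) ∧
      q a = c₁ ∧ -q b = c₂ := by
  have heuler : ∀ᵐ τ ∂volume.restrict (Ioc a b),
      rlKernel α (b - τ) • c₂ + rightRL α b P τ + Q τ = 0 :=
    ae_euler_of_forall_variation hα hab.le hP hQ fun v hv hvC ↦ by
      simpa [caputoTraj_zero_right] using hvar v hv hvC 0
  have hendpoints : c₁ + c₂ + ∫ s in a..b, P s = 0 := by
    rw [intervalIntegral.integral_of_le hab.le]
    refine add_integral_eq_zero_of_forall_inner hP fun h ↦ ?_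
    simpa [caputoTraj_zero_left, inner_add_left, intervalIntegral.integral_of_le hab.le]
      using hvar 0 stronglyMeasurable_zero ⟨0, by simp⟩ h
  have hPab : IntervalIntegrable P volume a b :=
    (intervalIntegrable_iff_integrableOn_Ioc_of_le hab.le).2 hP
  refine ⟨fun t ↦ -c₂ - ∫ s in t..b, P s, P, hPab, fun t ht ↦ ?_, fun hα1 ↦ ?_, fun hα1 ↦ ?_, ?_,
    by simp⟩
  · dsimp only
    rw [← intervalIntegral.integral_add_adjacent_intervals
      (hPab.mono_set (uIcc_subset_uIcc_left (Icc_subset_uIcc ht)))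
      (hPab.mono_set (uIcc_subset_uIcc_right (Icc_subset_uIcc ht)))]
    abel
  · rw [← restrict_Ico_eq_restrict_Icc]
    filter_upwards [ae_restrict_mem measurableSet_Ico] with t ht
    exact (rightRL_one_sub_of_abel hα hα1 hP heuler ht).symm
  · subst hα1
    rw [← restrict_Ioc_eq_restrict_Icc]
    filter_upwards [heuler] with t ht
    simp only [rightRL, rlKernel_one, one_smul] at ht
    rw [← neg_add', neg_eq_of_add_eq_zero_right ht]
  · dsimp only
    rw [← neg_add', neg_eq_iff_add_eq_zero, ← hendpoints]
    abel

end Costate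

section Bolza

variable {E : Type*} [NormedAddCommGroup E] [InnerProductSpace ℝ E] [FiniteDimensional ℝ E]
  {a b α β : ℝ} {φ : E × E → ℝ} {L : E × E × ℝ → ℝ} {x u : ℝ → E}

/-- The state gradient `∂₁L(x(s),u(s),s)` of the running cost, weighted by the kernel of the
integral of order `β` that defines the cost. -/
noncomputable def weightedStateGradient (b β : ℝ) (L : E × E × ℝ → ℝ) (x u : ℝ → E) (s : ℝ) : E :=
  rlKernel β (b - s) • gradient (fun z ↦ L (z, u s, s)) (x s)

/-- The control gradient `∂₂L(x(s),u(s),s)` of the running cost, weighted by the kernel of the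
integral of order `β` that defines the cost: the function `p̃` of the transversality conditions. -/
noncomputable def weightedControlGradient (b β : ℝ) (L : E × E × ℝ → ℝ) (x u : ℝ → E) (s : ℝ) :
    E :=
  rlKernel β (b - s) • gradient (fun z ↦ L (x s, z, s)) (u s)

theorem integrableOn_weightedStateGradient (hβ : 0 < β) (hab : a ≤ b) (hL : ContDiff ℝ 1 L)
    (hx : MemLp x ⊤ (volume.restrict (Ioc a b))) (hu : MemLp u ⊤ (volume.restrict (Ioc a b))) :
    IntegrableOn (weightedStateGradient b β L x u) (Ioc a b) :=
  (intervalIntegrable_rlKernel_sub hβ hab).1.smul_of_top_left <|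
    memLp_top_gradient_comp hL (fun s ↦ hasFDerivAt_prodMk_left (x s) (u s, s))
      (memLp_top_prodMk_prodMk_id hx hu)

theorem integrableOn_weightedControlGradient (hβ : 0 < β) (hab : a ≤ b) (hL : ContDiff ℝ 1 L)
    (hx : MemLp x ⊤ (volume.restrict (Ioc a b))) (hu : MemLp u ⊤ (volume.restrict (Ioc a b))) :
    IntegrableOn (weightedControlGradient b β L x u) (Ioc a b) :=
  (intervalIntegrable_rlKernel_sub hβ hab).1.smul_of_top_left <|
    memLp_top_gradient_comp hL
      (fun s ↦ (hasFDerivAt_prodMk_right (x s) (u s, s)).comp (u s)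
        (hasFDerivAt_prodMk_left (u s) s))
      (memLp_top_prodMk_prodMk_id hx hu)

theorem rightRL_one_sub_weightedControlGradient (b α β : ℝ) (L : E × E × ℝ → ℝ) (x u : ℝ → E)
    (t : ℝ) :
    rightRL (1 - α) b (weightedControlGradient b β L x u) t =
      ∫ s in t..b, (((s - t) ^ (-α) / Real.Gamma (1 - α)) *
        ((b - s) ^ (β - 1) / Real.Gamma β)) • gradient (fun z ↦ L (x s, z, s)) (u s) := by
  simp only [rightRL, weightedControlGradient, rlKernel, smul_smul, sub_sub_cancel_left]

theorem hasDerivAt_caputoBolza_inner (hα : 0 < α) (hβ : 0 < β) (hab : a ≤ b)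
    (hL : ContDiff ℝ 1 L) {v : ℝ → E} {y : E}
    (hφ : DifferentiableAt ℝ φ (y, caputoTraj a α u y b))
    (hu : MemLp u ⊤ (volume.restrict (Ioc a b))) (hv : MemLp v ⊤ (volume.restrict (Ioc a b)))
    (h : E) :
    HasDerivAt (fun ε : ℝ ↦ caputoBolza a b α β φ L (fun s ↦ u s + ε • v s) (y + ε • h))
      (⟪gradient (fun z ↦ φ (z, caputoTraj a α u y b)) y, h⟫ +
        ⟪gradient (fun z ↦ φ (y, z)) (caputoTraj a α u y b), caputoTraj a α v h b⟫ +
        ∫ s in a..b,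
          (⟪weightedStateGradient b β L (caputoTraj a α u y) u s, caputoTraj a α v h s⟫ +
            ⟪weightedControlGradient b β L (caputoTraj a α u y) u s, v s⟫)) 0 := by
  have hLdiff := hL.differentiable one_ne_zero
  simpa only [weightedStateGradient, weightedControlGradient, real_inner_smul_left, ← mul_add,
    fderiv_prodMk_apply_eq_inner_gradient hφ,
    fderiv_prodMk_prodMk_apply_eq_inner_gradient (hLdiff _)]
    using hasDerivAt_caputoBolza hα hβ hab hL hφ hu hv h

theorem stmt_7_general (hα : 0 < α) (hβ : 0 < β) (hab : a < b) (hL : ContDiff ℝ 1 L) {y : E}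
    (hφ : DifferentiableAt ℝ φ (y, caputoTraj a α u y b))
    (hu : MemLp u ⊤ (volume.restrict (Ioc a b)))
    (hmin : ∀ v : ℝ → E, StronglyMeasurable v → (∃ C, ∀ s, ‖v s‖ ≤ C) → ∀ h : E,
      IsLocalMin (fun ε : ℝ ↦ caputoBolza a b α β φ L (fun s ↦ u s + ε • v s) (y + ε • h)) 0) :
    ∃ q g : ℝ → E, IntervalIntegrable g volume a b ∧
      (∀ t ∈ Icc a b, q t = q a + ∫ s in a..t, g s) ∧
      (α < 1 → ∀ᵐ t ∂volume.restrict (Icc a b),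
        q t = rightRL (1 - α) b (weightedControlGradient b β L (caputoTraj a α u y) u) t) ∧
      (α = 1 → ∀ᵐ t ∂volume.restrict (Icc a b),
        q t = weightedControlGradient b β L (caputoTraj a α u y) u t) ∧
      q a = gradient (fun z ↦ φ (z, caputoTraj a α u y b)) (caputoTraj a α u y a) ∧
      -q b = gradient (fun z ↦ φ (caputoTraj a α u y a, z)) (caputoTraj a α u y b) := by
  have hx := memLp_top_caputoTraj hα hu y
  rw [caputoTraj_left]
  exact exists_costate_of_forall_variation hα hab
    (integrableOn_weightedStateGradient hβ hab.le hL hx hu)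
    (integrableOn_weightedControlGradient hβ hab.le hL hx hu)
    fun v hv hvC h ↦ (hmin v hv hvC h).hasDerivAt_eq_zero <|
      hasDerivAt_caputoBolza_inner hα hβ hab.le hL hφ hu (memLp_top_of_norm_le hv hvC) h

end Bolza

namespace admissible

variable {n : ℕ} {a b : ℝ} {u v : ℝ → EuclideanSpace ℝ (Fin n)}

theorem memLp_top (hu : admissible n a b u) : MemLp u ⊤ (volume.restrict (Ioc a b)) := by
  obtain ⟨hmeas, C, hC⟩ := hu
  refine memLp_top_of_bound hmeas.aestronglyMeasurable C ?_
  rw [ae_restrict_iff' measurableSet_Ioc]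
  filter_upwards [hC] with s hs hsab
  exact hs (Ioc_subset_Icc_self hsab)

theorem add_smul (hu : admissible n a b u) (hv : Measurable v) (hvC : ∃ C, ∀ s, ‖v s‖ ≤ C)
    (ε : ℝ) : admissible n a b (fun s ↦ u s + ε • v s) := by
  obtain ⟨hmeas, C, hC⟩ := hu
  obtain ⟨D, hD⟩ := hvC
  refine ⟨hmeas.add (hv.const_smul ε), C + ‖ε‖ * D, ?_⟩
  filter_upwards [hC] with s hs hsab
  refine norm_add_le_of_le (hs hsab) ?_
  rw [norm_smul]
  exact mul_le_mul_of_nonneg_left (hD s) (norm_nonneg ε)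

end admissible

theorem stmt_7 (n : ℕ) (hn : 1 ≤ n) (a b : ℝ) (hab : a < b)
    (α β : ℝ) (hα0 : 0 < α) (hα1 : α ≤ 1) (hβ : 0 < β)
    (φ : EuclideanSpace ℝ (Fin n) × EuclideanSpace ℝ (Fin n) → ℝ)
    (L : EuclideanSpace ℝ (Fin n) × EuclideanSpace ℝ (Fin n) × ℝ → ℝ)
    (hφ : ContDiff ℝ 2 φ) (hL : ContDiff ℝ 2 L)
    (u : ℝ → EuclideanSpace ℝ (Fin n)) (y : EuclideanSpace ℝ (Fin n))
    (hadm : admissible n a b u)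
    (hmin : ∀ u' : ℝ → EuclideanSpace ℝ (Fin n), ∀ y' : EuclideanSpace ℝ (Fin n),
      admissible n a b u' → bolza n a b α β φ L u y ≤ bolza n a b α β φ L u' y') :
    ∃ q g : ℝ → EuclideanSpace ℝ (Fin n),
      IntervalIntegrable g volume a b ∧
      (∀ t ∈ Icc a b, q t = q a + ∫ s in a..t, g s) ∧
      (α < 1 → ∀ᵐ t ∂(volume.restrict (Icc a b)),
          q t = ∫ s in t..b, (((s - t) ^ (-α) / Real.Gamma (1 - α)) *
              ((b - s) ^ (β - 1) / Real.Gamma β)) •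
            gradient (fun z => L (traj n a α u y s, z, s)) (u s)) ∧
      (α = 1 → ∀ᵐ t ∂(volume.restrict (Icc a b)),
          q t = ((b - t) ^ (β - 1) / Real.Gamma β) •
            gradient (fun z => L (traj n a α u y t, z, t)) (u t)) ∧
      q a = gradient (fun z => φ (z, traj n a α u y b)) (traj n a α u y a) ∧
      -q b = gradient (fun z => φ (traj n a α u y a, z)) (traj n a α u y b) := by
  simpa only [rightRL_one_sub_weightedControlGradient] using!
    stmt_7_general hα0 hβ hab (hL.of_le one_le_two) (hφ.differentiable two_ne_zero _)
      hadm.memLp_top fun v hv hvC h ↦ .of_forall fun ε ↦ by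
        simpa using! hmin _ (y + ε • h) (hadm.add_smul hv.measurable hvC ε)
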